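/- (Hardy inequality, the case of Example 3.1 for a hyperplane through the base point.) Let n ≥ 3. For every smooth compactly supported function φ : ℝⁿ → ℝ one has ∫_{ℝⁿ} ‖∇φ(x)‖² dx ≥ ((n−2)²/4) · ∫_{ℝⁿ} φ(x)²/‖x‖² dx. -/

import Mathlib

open MeasureTheory

/-!
Integrating by parts against the radial field `x` gives `∫ Df(x) x = -n ∫ f`. For
`f = φ² / (‖x‖² + ε)` and `c = (n - 2) / 2`, adding `c` times this identity to the expansion of
`0 ≤ (‖Dφ‖ - c |φ| ‖x‖ / (‖x‖² + ε))²` yields `c² ∫ φ² / (‖x‖² + ε) ≤ ∫ ‖Dφ‖²`. The weight is smooth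
because `ε > 0`; Fatou's lemma lets `ε` tend to `0` and shows that the limit is integrable.
-/

open Filter Module
open scoped Topology

theorem integrable_and_integral_norm_le_of_tendsto {α ι G : Type*} {_ : MeasurableSpace α}
    [NormedAddCommGroup G] {μ : Measure α} {l : Filter ι} [l.NeBot] [l.IsCountablyGenerated]
    {F : ι → α → G} {f : α → G} {C : ℝ} (hF : ∀ i, Integrable (F i) μ)
    (hF_le : ∀ i, ∫ a, ‖F i a‖ ∂μ ≤ C) (hlim : ∀ᵐ a ∂μ, Tendsto (F · a) l (𝓝 (f a))) :
    Integrable f μ ∧ ∫ a, ‖f a‖ ∂μ ≤ C := by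
  have hf_lintegral : ∫⁻ a, ‖f a‖ₑ ∂μ ≤ ENNReal.ofReal C := by
    calc ∫⁻ a, ‖f a‖ₑ ∂μ
        = ∫⁻ a, liminf (fun i ↦ ‖F i a‖ₑ) l ∂μ :=
          lintegral_congr_ae <| hlim.mono fun a ha ↦ ha.enorm.liminf_eq.symm
      _ ≤ liminf (fun i ↦ ∫⁻ a, ‖F i a‖ₑ ∂μ) l :=
          lintegral_liminf_le' fun i ↦ (hF i).aestronglyMeasurable.enorm
      _ ≤ limsup (fun _ ↦ ENNReal.ofReal C) l := liminf_le_limsup_of_frequently_le <|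
          .of_forall fun i ↦ by
            rw [← ofReal_integral_norm_eq_lintegral_enorm (hF i)]
            exact ENNReal.ofReal_le_ofReal (hF_le i)
      _ = ENNReal.ofReal C := limsup_const _
  have hf : Integrable f μ :=
    ⟨aestronglyMeasurable_of_tendsto_ae l (fun i ↦ (hF i).aestronglyMeasurable) hlim,
      hf_lintegral.trans_lt ENNReal.ofReal_lt_top⟩
  obtain ⟨i⟩ : Nonempty ι := l.nonempty_of_neBot
  have hC : 0 ≤ C := (integral_nonneg fun a ↦ norm_nonneg (F i a)).trans (hF_le i)
  rw [← ofReal_integral_norm_eq_lintegral_enorm hf] at hf_lintegral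
  exact ⟨hf, (ENNReal.ofReal_le_ofReal_iff hC).1 hf_lintegral⟩

section Euler

variable {E F : Type*} [NormedAddCommGroup E] [NormedSpace ℝ E] [MeasurableSpace E] [BorelSpace E]
  [NormedAddCommGroup F] [NormedSpace ℝ F] {μ : Measure E} {f : E → F}

theorem integrable_fderiv_apply_self [IsFiniteMeasureOnCompacts μ] (hf : ContDiff ℝ 1 f)
    (hfc : HasCompactSupport f) : Integrable (fun x ↦ fderiv ℝ f x x) μ :=
  ((hf.continuous_fderiv one_ne_zero).clm_apply continuous_id).integrable_of_hasCompactSupport <|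
    (hfc.fderiv ℝ).mono fun x hx h ↦ hx (by simp [h])

theorem integrable_clm_smul_fderiv_apply [IsFiniteMeasureOnCompacts μ] (hf : ContDiff ℝ 1 f)
    (hfc : HasCompactSupport f) (ℓ : StrongDual ℝ E) (v : E) :
    Integrable (fun x ↦ ℓ x • fderiv ℝ f x v) μ :=
  (ℓ.continuous.smul ((hf.continuous_fderiv one_ne_zero).clm_apply
    continuous_const)).integrable_of_hasCompactSupport (hfc.fderiv_apply ℝ v).smul_left

theorem integral_clm_smul_fderiv_apply [FiniteDimensional ℝ E] [μ.IsAddHaarMeasure]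
    (hf : ContDiff ℝ 1 f) (hfc : HasCompactSupport f) (ℓ : StrongDual ℝ E) (v : E) :
    ∫ x, ℓ x • fderiv ℝ f x v ∂μ = -(ℓ v • ∫ x, f x ∂μ) := by
  have hf_int : Integrable f μ := hf.continuous.integrable_of_hasCompactSupport hfc
  rw [integral_smul_fderiv_eq_neg_fderiv_smul_of_integrable]
  · simp [integral_smul]
  · simpa using! hf_int.smul (ℓ v)
  · exact integrable_clm_smul_fderiv_apply hf hfc ℓ v
  · exact (ℓ.continuous.smul hf.continuous).integrable_of_hasCompactSupport hfc.smul_left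
  · exact fun x _ ↦ ℓ.differentiableAt
  · exact fun x _ ↦ hf.differentiable one_ne_zero x

theorem integral_fderiv_apply_self [FiniteDimensional ℝ E] [μ.IsAddHaarMeasure]
    (hf : ContDiff ℝ 1 f) (hfc : HasCompactSupport f) :
    ∫ x, fderiv ℝ f x x ∂μ = -((finrank ℝ E : ℝ) • ∫ x, f x ∂μ) := by
  let b := finBasis ℝ E
  let coord (i) : StrongDual ℝ E := (b.coord i).toContinuousLinearMap
  have fderiv_eq_sum (x : E) : fderiv ℝ f x x = ∑ i, coord i x • fderiv ℝ f x (b i) := by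
    calc fderiv ℝ f x x = fderiv ℝ f x (∑ i, b.repr x i • b i) := by rw [b.sum_repr]
      _ = ∑ i, coord i x • fderiv ℝ f x (b i) := by simp only [map_sum, map_smul]; rfl
  have coord_basis (i) : coord i (b i) = 1 := by simp [coord]
  calc ∫ x, fderiv ℝ f x x ∂μ = ∑ i, ∫ x, coord i x • fderiv ℝ f x (b i) ∂μ := by
        simp_rw [fderiv_eq_sum]
        exact integral_finsetSum _ fun i _ ↦
          integrable_clm_smul_fderiv_apply hf hfc (coord i) (b i)
    _ = ∑ _ : Fin (finrank ℝ E), -∫ x, f x ∂μ := by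
        simp_rw [integral_clm_smul_fderiv_apply hf hfc, coord_basis, one_smul]
    _ = -((finrank ℝ E : ℝ) • ∫ x, f x ∂μ) := by simp [Nat.cast_smul_eq_nsmul]

end Euler

theorem neg_two_mul_mul_apply_le {E : Type*} [SeminormedAddCommGroup E] [NormedSpace ℝ E]
    (L : StrongDual ℝ E) (t : ℝ) (x : E) :
    -(2 * t * L x) ≤ ‖L‖ ^ 2 + t ^ 2 * ‖x‖ ^ 2 := by
  calc -(2 * t * L x) = -(2 * L (t • x)) := by simp [mul_assoc]
    _ ≤ 2 * (‖L‖ * ‖t • x‖) := by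
      linarith [(neg_le_abs (L (t • x))).trans (L.le_opNorm (t • x))]
    _ ≤ ‖L‖ ^ 2 + ‖t • x‖ ^ 2 := by linarith [two_mul_le_add_sq ‖L‖ ‖t • x‖]
    _ = ‖L‖ ^ 2 + t ^ 2 * ‖x‖ ^ 2 := by simp [norm_smul, mul_pow]

theorem hasCompactSupport_sq_div {X : Type*} [TopologicalSpace X] {φ : X → ℝ}
    (hφ : HasCompactSupport φ) (w : X → ℝ) : HasCompactSupport fun x ↦ φ x ^ 2 / w x :=
  hφ.mono fun x hx h ↦ hx (by simp [h])

theorem integrable_norm_fderiv_sq {E F : Type*} [NormedAddCommGroup E] [NormedSpace ℝ E]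
    [MeasurableSpace E] [OpensMeasurableSpace E] [NormedAddCommGroup F] [NormedSpace ℝ F]
    {μ : Measure E} [IsFiniteMeasureOnCompacts μ] {f : E → F} (hf : ContDiff ℝ 1 f)
    (hfc : HasCompactSupport f) : Integrable (fun x ↦ ‖fderiv ℝ f x‖ ^ 2) μ :=
  ((hf.continuous_fderiv one_ne_zero).norm.pow 2).integrable_of_hasCompactSupport <|
    (hfc.fderiv ℝ).mono fun x hx h ↦ hx (by simp [h])

section Hardy

variable {E : Type*} [NormedAddCommGroup E] [InnerProductSpace ℝ E] {φ : E → ℝ} {ε : ℝ}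

theorem contDiff_sq_div_norm_sq_add {n : WithTop ℕ∞} (hφ : ContDiff ℝ n φ) (hε : 0 < ε) :
    ContDiff ℝ n fun x ↦ φ x ^ 2 / (‖x‖ ^ 2 + ε) :=
  (hφ.pow 2).div ((contDiff_norm_sq ℝ).add contDiff_const) fun x ↦ by positivity

theorem fderiv_sq_div_norm_sq_add_apply_self {x : E} (hφ : DifferentiableAt ℝ φ x)
    (hx : ‖x‖ ^ 2 + ε ≠ 0) :
    fderiv ℝ (fun y ↦ φ y ^ 2 / (‖y‖ ^ 2 + ε)) x x =
      2 * (φ x / (‖x‖ ^ 2 + ε)) * fderiv ℝ φ x x -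
        2 * (φ x / (‖x‖ ^ 2 + ε)) ^ 2 * ‖x‖ ^ 2 := by
  have hφ_sq : HasFDerivAt (fun y ↦ φ y ^ 2) ((2 * φ x) • fderiv ℝ φ x) x := by
    simpa using hφ.hasFDerivAt.pow 2
  have h_inv : HasFDerivAt (fun y ↦ (‖y‖ ^ 2 + ε)⁻¹)
      (-((‖x‖ ^ 2 + ε) ^ 2)⁻¹ • 2 • innerSL ℝ x) x :=
    (hasDerivAt_inv hx).comp_hasFDerivAt x
      ((hasStrictFDerivAt_norm_sq x).hasFDerivAt.add_const ε)
  simp_rw [div_eq_mul_inv]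
  rw [(hφ_sq.fun_mul h_inv).fderiv]
  simp only [← inv_pow, neg_smul, smul_neg, add_apply, neg_apply, smul_apply, coe_innerSL_apply,
    real_inner_self_eq_norm_sq, nsmul_eq_mul, Nat.cast_ofNat, smul_eq_mul]
  ring

theorem sq_mul_sq_div_norm_sq_add_le {c : ℝ} (hc : 0 ≤ c) (hε : 0 < ε) {x : E}
    (hφ : DifferentiableAt ℝ φ x) :
    c ^ 2 * (φ x ^ 2 / (‖x‖ ^ 2 + ε)) ≤ ‖fderiv ℝ φ x‖ ^ 2 +
      c * (fderiv ℝ (fun y ↦ φ y ^ 2 / (‖y‖ ^ 2 + ε)) x x +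
        (2 * c + 2) * (φ x ^ 2 / (‖x‖ ^ 2 + ε))) := by
  have hx : 0 < ‖x‖ ^ 2 + ε := by positivity
  rw [fderiv_sq_div_norm_sq_add_apply_self hφ hx.ne']
  set s := φ x / (‖x‖ ^ 2 + ε) with hs
  have young := neg_two_mul_mul_apply_le (fderiv ℝ φ x) (c * s) x
  have weight_le : s ^ 2 * ‖x‖ ^ 2 ≤ φ x ^ 2 / (‖x‖ ^ 2 + ε) := by
    calc s ^ 2 * ‖x‖ ^ 2 ≤ s ^ 2 * (‖x‖ ^ 2 + ε) := by gcongr; linarith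
      _ = φ x ^ 2 / (‖x‖ ^ 2 + ε) := by rw [hs]; field_simp
  have slack := mul_le_mul_of_nonneg_left weight_le (by positivity : 0 ≤ c ^ 2 + 2 * c)
  linear_combination young + slack

variable [FiniteDimensional ℝ E] [MeasurableSpace E] [BorelSpace E] {μ : Measure E}
  [μ.IsAddHaarMeasure]

theorem hardy_inequality_norm_sq_add (hE : 2 ≤ finrank ℝ E) (hφ : ContDiff ℝ 1 φ)
    (hφc : HasCompactSupport φ) (hε : 0 < ε) :
    ((finrank ℝ E : ℝ) - 2) ^ 2 / 4 * ∫ x, φ x ^ 2 / (‖x‖ ^ 2 + ε) ∂μ ≤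
      ∫ x, ‖fderiv ℝ φ x‖ ^ 2 ∂μ := by
  set f : E → ℝ := fun x ↦ φ x ^ 2 / (‖x‖ ^ 2 + ε)
  set c : ℝ := ((finrank ℝ E : ℝ) - 2) / 2 with hc
  have hc_nonneg : 0 ≤ c := by
    have : (2 : ℝ) ≤ finrank ℝ E := mod_cast hE
    linarith
  have hf : ContDiff ℝ 1 f := contDiff_sq_div_norm_sq_add hφ hε
  have hfc : HasCompactSupport f := hasCompactSupport_sq_div hφc _
  have hf_int : Integrable f μ := hf.continuous.integrable_of_hasCompactSupport hfc
  have hf'_int : Integrable (fun x ↦ fderiv ℝ f x x) μ := integrable_fderiv_apply_self hf hfc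
  have hφ'_int : Integrable (fun x ↦ ‖fderiv ℝ φ x‖ ^ 2) μ := integrable_norm_fderiv_sq hφ hφc
  have euler : ∫ x, fderiv ℝ f x x + (2 * c + 2) * f x ∂μ = 0 := by
    rw [integral_add hf'_int (hf_int.const_mul _), integral_const_mul,
      integral_fderiv_apply_self hf hfc, hc, smul_eq_mul]
    ring
  have euler_int : Integrable (fun x ↦ c * (fderiv ℝ f x x + (2 * c + 2) * f x)) μ :=
    (hf'_int.add (hf_int.const_mul _)).const_mul c
  calc ((finrank ℝ E : ℝ) - 2) ^ 2 / 4 * ∫ x, f x ∂μ = ∫ x, c ^ 2 * f x ∂μ := by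
        rw [integral_const_mul, hc]; ring
    _ ≤ ∫ x, ‖fderiv ℝ φ x‖ ^ 2 + c * (fderiv ℝ f x x + (2 * c + 2) * f x) ∂μ :=
        integral_mono (hf_int.const_mul _) (hφ'_int.add euler_int) fun x ↦
          sq_mul_sq_div_norm_sq_add_le hc_nonneg hε (hφ.differentiable one_ne_zero x)
    _ = ∫ x, ‖fderiv ℝ φ x‖ ^ 2 ∂μ := by
        rw [integral_add hφ'_int euler_int, integral_const_mul, euler, mul_zero, add_zero]

theorem hardy_inequality_general (hE : 3 ≤ finrank ℝ E) (hφ : ContDiff ℝ 1 φ)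
    (hφc : HasCompactSupport φ) :
    Integrable (fun x ↦ φ x ^ 2 / ‖x‖ ^ 2) μ ∧
      ((finrank ℝ E : ℝ) - 2) ^ 2 / 4 * ∫ x, φ x ^ 2 / ‖x‖ ^ 2 ∂μ ≤
        ∫ x, ‖fderiv ℝ φ x‖ ^ 2 ∂μ := by
  have : Nontrivial E := nontrivial_of_finrank_pos (R := ℝ) (by lia)
  have hC : 0 < ((finrank ℝ E : ℝ) - 2) ^ 2 / 4 := by
    have : (3 : ℝ) ≤ finrank ℝ E := mod_cast hE
    have : 0 < (finrank ℝ E : ℝ) - 2 := by linarith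
    positivity
  let δ (k : ℕ) : ℝ := 1 / ((k : ℝ) + 1)
  have hδ (k : ℕ) : 0 < δ k := Nat.one_div_pos_of_nat
  have h_int (k : ℕ) : Integrable (fun x ↦ φ x ^ 2 / (‖x‖ ^ 2 + δ k)) μ :=
    (contDiff_sq_div_norm_sq_add hφ (hδ k)).continuous.integrable_of_hasCompactSupport
      (hasCompactSupport_sq_div hφc _)
  have h_le (k : ℕ) : ∫ x, ‖φ x ^ 2 / (‖x‖ ^ 2 + δ k)‖ ∂μ ≤
      (∫ x, ‖fderiv ℝ φ x‖ ^ 2 ∂μ) / (((finrank ℝ E : ℝ) - 2) ^ 2 / 4) := by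
    have h_nonneg (x : E) : 0 ≤ φ x ^ 2 / (‖x‖ ^ 2 + δ k) := by have := hδ k; positivity
    simp_rw [Real.norm_of_nonneg (h_nonneg _), le_div_iff₀' hC]
    exact hardy_inequality_norm_sq_add (by lia) hφ hφc (hδ k)
  have h_lim : ∀ᵐ x ∂μ, Tendsto (fun k ↦ φ x ^ 2 / (‖x‖ ^ 2 + δ k)) atTop
      (𝓝 (φ x ^ 2 / ‖x‖ ^ 2)) := by
    filter_upwards [Measure.ae_ne μ 0] with x hx
    refine tendsto_const_nhds.div ?_ (by simpa using hx)
    simpa [δ] using tendsto_const_nhds.add (tendsto_one_div_add_atTop_nhds_zero_nat (𝕜 := ℝ))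
  obtain ⟨h_integrable, h_bound⟩ := integrable_and_integral_norm_le_of_tendsto h_int h_le h_lim
  refine ⟨h_integrable, (le_div_iff₀' hC).1 ?_⟩
  simpa using h_bound

end Hardy

/-- **Hardy inequality.** For `n ≥ 3` and any smooth compactly supported
`φ : ℝⁿ → ℝ`, `∫ ‖∇φ‖² ≥ ((n-2)²/4) ∫ φ²/‖x‖²`. -/
theorem hardy_inequality (n : ℕ) (hn : 3 ≤ n)
    (φ : EuclideanSpace ℝ (Fin n) → ℝ)
    (hφ : ContDiff ℝ (⊤ : ℕ∞) φ) (hφc : HasCompactSupport φ) :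
    ((n : ℝ) - 2) ^ 2 / 4 * ∫ x, φ x ^ 2 / ‖x‖ ^ 2 ≤ ∫ x, ‖gradient φ x‖ ^ 2 := by
  simpa [gradient] using
    (hardy_inequality_general (μ := volume) (by simpa using hn) (hφ.of_le (by simp)) hφc).2
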